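/- Let n ≥ 3 and let S = {b, ba} ⊆ D_n. Then Cay(D_n, S) exhibits PST at the minimum time n: PST occurs between some pair of distinct vertices at time n, and no PST occurs between any pair of distinct vertices at any time σ with 1 ≤ σ < n. -/

import Mathlib

/-!
The graph `Cay(D_n, {b, ba})` is the cycle of length `2n`: the vertices are traversed by the
walk `vtx : ℤ → D_n`, `vtx (2j) = a^j`, `vtx (2j+1) = b a^(j+1)`, and the neighbours of `vtx i` are
`vtx (i + 1)` and `vtx (i - 1)` (`neighbors_vtx`). The Chebyshev recurrence then gives
`T_k(P) e_{vtx i} = (e_{vtx (i + k)} + e_{vtx (i - k)}) / 2` (`chebP_vtx`), the analogue of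
`2 cos θ cos kθ = cos (k + 1)θ + cos (k - 1)θ`. This is a standard basis vector exactly when
`vtx (i + k) = vtx (i - k)`, that is, when `n ∣ k` (`vtx_add_eq_vtx_sub_iff`). At `k = n` it is the
basis vector of the antipode of `vtx i`, and no `k` with `1 ≤ k < n` qualifies.
-/

open Polynomial Matrix

noncomputable section

namespace PaperPST

/-! ### Grover-walk PST data for Cayley graphs over a general finite group -/

/-- The adjacency matrix of the Cayley graph `Cay(Γ, S)`: `A u v = 1` iff `u * v⁻¹ ∈ S`. -/
def adjG (Γ : Type*) [Group Γ] [Fintype Γ] [DecidableEq Γ] (S : Finset Γ) : Matrix Γ Γ ℂ :=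
  Matrix.of fun u v => if u * v⁻¹ ∈ S then 1 else 0

/-- The discriminant matrix `P = (1/|S|) A` of `Cay(Γ, S)`. -/
def discG (Γ : Type*) [Group Γ] [Fintype Γ] [DecidableEq Γ] (S : Finset Γ) : Matrix Γ Γ ℂ :=
  (S.card : ℂ)⁻¹ • adjG Γ S

/-- `T_τ(P)`, the `τ`-th Chebyshev polynomial of the first kind evaluated at the
discriminant matrix of `Cay(Γ, S)`. -/
def chebG (Γ : Type*) [Group Γ] [Fintype Γ] [DecidableEq Γ] (S : Finset Γ) (τ : ℕ) :
    Matrix Γ Γ ℂ :=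
  Polynomial.aeval (discG Γ S) (Polynomial.Chebyshev.T ℂ τ)

/-- Perfect state transfer between vertices `u` and `v` of `Cay(Γ, S)` at time `τ`:
`T_τ(P) e_u = e_v`. -/
def PSTG (Γ : Type*) [Group Γ] [Fintype Γ] [DecidableEq Γ] (S : Finset Γ) (τ : ℕ)
    (u v : Γ) : Prop :=
  chebG Γ S τ *ᵥ Pi.single u 1 = Pi.single v 1

/-- Evaluation of the `τ`-th Chebyshev polynomial of the first kind at a complex number. -/
def Teval (τ : ℕ) (x : ℂ) : ℂ := (Polynomial.Chebyshev.T ℂ τ).eval x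

/-! ### Specialization to the dihedral group `D_n` -/

/-- Test whether an element of the dihedral group is a rotation `a^k`. -/
def isRot {n : ℕ} : DihedralGroup n → Bool
  | .r _ => true
  | .sr _ => false

/-- The adjacency matrix of the Cayley graph `Cay(D_n, S)`. -/
def adjC (n : ℕ) (S : Finset (DihedralGroup n)) :
    Matrix (DihedralGroup n) (DihedralGroup n) ℂ :=
  Matrix.of fun u v => if u * v⁻¹ ∈ S then 1 else 0

/-- The discriminant matrix `P = (1/|S|) A` of `Cay(D_n, S)`. -/
def disc (n : ℕ) (S : Finset (DihedralGroup n)) :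
    Matrix (DihedralGroup n) (DihedralGroup n) ℂ :=
  (S.card : ℂ)⁻¹ • adjC n S

/-- `T_τ(P)`, the `τ`-th Chebyshev polynomial of the first kind evaluated at the
discriminant matrix. -/
def chebP (n : ℕ) [NeZero n] (S : Finset (DihedralGroup n)) (τ : ℕ) :
    Matrix (DihedralGroup n) (DihedralGroup n) ℂ :=
  Polynomial.aeval (disc n S) (Polynomial.Chebyshev.T ℂ τ)

/-- Perfect state transfer between vertices `u` and `v` of `Cay(D_n, S)` at time `τ`:
`T_τ(P) e_u = e_v`. -/
def PST (n : ℕ) [NeZero n] (S : Finset (DihedralGroup n)) (τ : ℕ)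
    (u v : DihedralGroup n) : Prop :=
  chebP n S τ *ᵥ Pi.single u 1 = Pi.single v 1

/-- `ω = e^{2πi/n}`. -/
def omega (n : ℕ) : ℂ := Complex.exp (2 * Real.pi * Complex.I / n)

/-- `η_h(C) = Σ_{0 ≤ k ≤ n-1, a^k ∈ C} ω^{hk}`. -/
def eta (n : ℕ) (h : ℕ) (C : Finset (DihedralGroup n)) : ℂ :=
  ∑ k ∈ Finset.range n, if DihedralGroup.r (k : ZMod n) ∈ C then omega n ^ (h * k) else 0

/-- `S_1 = S ∩ ⟨a⟩`. -/
def S1 (n : ℕ) (S : Finset (DihedralGroup n)) : Finset (DihedralGroup n) :=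
  S.filter fun x => isRot x

/-- `S_2 = bS ∩ ⟨a⟩`, i.e. `{a^k : b a^k ∈ S}`. -/
def S2 (n : ℕ) (S : Finset (DihedralGroup n)) : Finset (DihedralGroup n) :=
  (S.image fun s => DihedralGroup.sr 0 * s).filter fun x => isRot x

/-- `S_2⁻¹ = {s⁻¹ : s ∈ S_2}`. -/
def S2inv (n : ℕ) (S : Finset (DihedralGroup n)) : Finset (DihedralGroup n) :=
  (S2 n S).image fun x => x⁻¹

/-- The number of `a^k ∈ C` with `0 ≤ k ≤ n-1` and `k % 2 = p`. -/
def dcnt (n : ℕ) (C : Finset (DihedralGroup n)) (p : ℕ) : ℕ :=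
  ((Finset.range n).filter fun k => k % 2 = p ∧ DihedralGroup.r (k : ZMod n) ∈ C).card

/-- Vertex labels `0, …, 2n-1`: label `u < n` is `a^u`, and label `n ≤ u < 2n` is `b a^{u-n}`. -/
def lab (n : ℕ) (u : ℕ) : DihedralGroup n :=
  if u < n then DihedralGroup.r (u : ZMod n) else DihedralGroup.sr ((u - n : ℕ) : ZMod n)

/-- `Cay(D_n, S)` is a normal Cayley graph if `S` is closed under conjugation. -/
def IsNormalCay (n : ℕ) (S : Finset (DihedralGroup n)) : Prop :=
  ∀ g : DihedralGroup n, ∀ s ∈ S, g * s * g⁻¹ ∈ S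

/-- `Cay(D_n, S)` exhibits PST at the minimum time `τ`. -/
def exhibitsMinPST (n : ℕ) [NeZero n] (S : Finset (DihedralGroup n)) (τ : ℕ) : Prop :=
  (∃ u v : DihedralGroup n, u ≠ v ∧ PST n S τ u v) ∧
  ∀ σ : ℕ, 1 ≤ σ → σ < τ → ∀ u v : DihedralGroup n, u ≠ v → ¬ PST n S σ u v

/-! ### Eigenvector candidates -/

/-- The all-ones vector. -/
def w1 (n : ℕ) : DihedralGroup n → ℂ := fun _ => 1

/-- The vector which is `1` on `G_0` and `-1` on `G_1`. -/
def w2 (n : ℕ) : DihedralGroup n → ℂ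
  | .r _ => 1
  | .sr _ => -1

/-- The vector with entry `(-1)^k` at `a^k` and `(-1)^k` at `b a^k`. -/
def w3 (n : ℕ) : DihedralGroup n → ℂ
  | .r k => (-1) ^ k.val
  | .sr k => (-1) ^ k.val

/-- The vector with entry `(-1)^k` at `a^k` and `(-1)^{k+1}` at `b a^k`. -/
def w4 (n : ℕ) : DihedralGroup n → ℂ
  | .r k => (-1) ^ k.val
  | .sr k => (-1) ^ (k.val + 1)

/-- The vector with entry `ω^{hk}` at `a^k` and `0` at `b a^k`. -/
def uv1 (n h : ℕ) : DihedralGroup n → ℂ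
  | .r k => omega n ^ (h * k.val)
  | .sr _ => 0

/-- The vector with entry `0` at `a^k` and `ω^{hk}` at `b a^k`. -/
def uv2 (n h : ℕ) : DihedralGroup n → ℂ
  | .r _ => 0
  | .sr k => omega n ^ (h * k.val)

/-- The vector with entry `0` at `a^k` and `ω^{-hk}` at `b a^k`. -/
def uv3 (n h : ℕ) : DihedralGroup n → ℂ
  | .r _ => 0
  | .sr k => (omega n)⁻¹ ^ (h * k.val)

/-- The vector with entry `ω^{-hk}` at `a^k` and `0` at `b a^k`. -/
def uv4 (n h : ℕ) : DihedralGroup n → ℂ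
  | .r k => (omega n)⁻¹ ^ (h * k.val)
  | .sr _ => 0

/-- The vector with entry `conj(ℓ)·ω^{hk}` at `a^k` and `ω^{hk}` at `b a^k`. -/
def vv1 (n h : ℕ) (ℓ : ℂ) : DihedralGroup n → ℂ
  | .r k => (starRingEnd ℂ) ℓ * omega n ^ (h * k.val)
  | .sr k => omega n ^ (h * k.val)

/-- The vector with entry `ω^{-hk}` at `a^k` and `conj(ℓ)·ω^{-hk}` at `b a^k`. -/
def vv2 (n h : ℕ) (ℓ : ℂ) : DihedralGroup n → ℂ
  | .r k => (omega n)⁻¹ ^ (h * k.val)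
  | .sr k => (starRingEnd ℂ) ℓ * (omega n)⁻¹ ^ (h * k.val)

/-- The vector with entry `-ω^{hk}` at `a^k` and `ℓ·ω^{hk}` at `b a^k`. -/
def vv3 (n h : ℕ) (ℓ : ℂ) : DihedralGroup n → ℂ
  | .r k => -(omega n ^ (h * k.val))
  | .sr k => ℓ * omega n ^ (h * k.val)

/-- The vector with entry `ℓ·ω^{-hk}` at `a^k` and `-ω^{-hk}` at `b a^k`. -/
def vv4 (n h : ℕ) (ℓ : ℂ) : DihedralGroup n → ℂ
  | .r k => ℓ * (omega n)⁻¹ ^ (h * k.val)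
  | .sr k => -((omega n)⁻¹ ^ (h * k.val))

/-- The closed walk around the cycle `Cay(D_n, {b, ba})`, of period `2n`: `vtx (2j) = a^j` and
`vtx (2j+1) = b a^(j+1)`. -/
def vtx (n : ℕ) (i : ℤ) : DihedralGroup n :=
  if Even i then DihedralGroup.r ((i / 2 : ℤ) : ZMod n)
  else DihedralGroup.sr ((i / 2 + 1 : ℤ) : ZMod n)

lemma vtx_even (n : ℕ) (j : ℤ) : vtx n (2 * j) = DihedralGroup.r (j : ZMod n) := by
  simp [vtx]

lemma vtx_odd (n : ℕ) (j : ℤ) : vtx n (2 * j + 1) = DihedralGroup.sr ((j : ZMod n) + 1) := by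
  have h : ¬ Even (2 * j + 1) := by simp
  have h2 : (2 * j + 1) / 2 = j := by omega
  simp [vtx, h2]

lemma vtx_surjective (n : ℕ) : Function.Surjective (vtx n) := by
  rintro (j | j) <;> obtain ⟨k, rfl⟩ := ZMod.intCast_surjective j
  · exact ⟨2 * k, vtx_even n k⟩
  · exact ⟨2 * (k - 1) + 1, by simp [vtx_odd]⟩

lemma vtx_add_eq_vtx_sub_iff (n : ℕ) (i : ℤ) (k : ℕ) :
    vtx n (i + k) = vtx n (i - k) ↔ n ∣ k := by
  rw [← ZMod.natCast_eq_zero_iff]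
  -- The two indices differ by `2k`, so they have the same parity.
  obtain ⟨j, hj⟩ := Int.even_or_odd' (i - k)
  have key : ∀ c : ZMod n, c + k = c ↔ (k : ZMod n) = 0 := fun c => by simp
  rcases hj with hj | hj
  · have h : i + k = 2 * (j + k) := by omega
    rw [h, hj, vtx_even, vtx_even, DihedralGroup.r.injEq]
    push_cast
    exact key _
  · have h : i + k = 2 * (j + k) + 1 := by omega
    rw [h, hj, vtx_odd, vtx_odd, DihedralGroup.sr.injEq]
    push_cast
    rw [add_right_comm]
    exact key _

/-- Left multiplication by `b` and by `ba` moves one step along the walk, in opposite directions;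
which of the two moves forward depends on the parity of the position. -/
lemma neighbors_vtx (n : ℕ) (i : ℤ) :
    (DihedralGroup.sr 0 * vtx n i = vtx n (i - 1) ∧
      DihedralGroup.sr 1 * vtx n i = vtx n (i + 1)) ∨
    (DihedralGroup.sr 0 * vtx n i = vtx n (i + 1) ∧
      DihedralGroup.sr 1 * vtx n i = vtx n (i - 1)) := by
  obtain ⟨j, rfl | rfl⟩ := Int.even_or_odd' i
  · left
    have h : 2 * j - 1 = 2 * (j - 1) + 1 := by ring
    rw [h, vtx_even, vtx_odd, vtx_odd]
    simp [add_comm]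
  · right
    have h : 2 * j + 1 + 1 = 2 * (j + 1) := by ring
    have h' : 2 * j + 1 - 1 = 2 * j := by ring
    rw [h, h', vtx_even, vtx_odd, vtx_even]
    simp

lemma disc_single (n : ℕ) [NeZero n] (hn : 3 ≤ n) (v : DihedralGroup n) :
    disc n {DihedralGroup.sr 0, DihedralGroup.sr 1} *ᵥ Pi.single v 1 =
      (2 : ℂ)⁻¹ • (Pi.single (DihedralGroup.sr 0 * v) 1 +
        Pi.single (DihedralGroup.sr 1 * v) 1) := by
  have : Fact (1 < n) := ⟨by omega⟩
  have hne : (DihedralGroup.sr 0 : DihedralGroup n) ≠ DihedralGroup.sr 1 := by simp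
  ext u
  simp only [disc, Finset.card_pair hne, Matrix.mulVec_single_one, Matrix.col_apply,
    Matrix.smul_apply, adjC, Matrix.of_apply, Finset.mem_insert, Finset.mem_singleton,
    mul_inv_eq_iff_eq_mul, Pi.smul_apply, Pi.add_apply, Pi.single_apply]
  by_cases h0 : u = DihedralGroup.sr 0 * v
  · simp [h0]
  · simp [h0]

lemma disc_vtx (n : ℕ) [NeZero n] (hn : 3 ≤ n) (i : ℤ) :
    disc n {DihedralGroup.sr 0, DihedralGroup.sr 1} *ᵥ Pi.single (vtx n i) 1 =
      (2 : ℂ)⁻¹ • (Pi.single (vtx n (i + 1)) 1 + Pi.single (vtx n (i - 1)) 1) := by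
  rw [disc_single n hn]
  rcases neighbors_vtx n i with ⟨h0, h1⟩ | ⟨h0, h1⟩
  · rw [h0, h1, add_comm]
  · rw [h0, h1]

lemma chebP_add_two (n : ℕ) [NeZero n] (S : Finset (DihedralGroup n)) (k : ℕ)
    (f : DihedralGroup n → ℂ) :
    chebP n S (k + 2) *ᵥ f =
      (2 : ℂ) • (disc n S *ᵥ (chebP n S (k + 1) *ᵥ f)) - chebP n S k *ᵥ f := by
  have h : chebP n S (k + 2) = (2 : ℂ) • (disc n S * chebP n S (k + 1)) - chebP n S k := by
    simp only [chebP]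
    push_cast
    rw [Polynomial.Chebyshev.T_add_two]
    simp [two_smul, two_mul, add_mul]
  rw [h, Matrix.sub_mulVec, Matrix.smul_mulVec, Matrix.mulVec_mulVec]

/-- The walk started at a vertex of the cycle splits evenly into the two vertices at distance `k`
along the cycle. -/
lemma chebP_vtx (n : ℕ) [NeZero n] (hn : 3 ≤ n) (k : ℕ) (i : ℤ) :
    chebP n {DihedralGroup.sr 0, DihedralGroup.sr 1} k *ᵥ Pi.single (vtx n i) 1 =
      (2 : ℂ)⁻¹ • (Pi.single (vtx n (i + k)) 1 + Pi.single (vtx n (i - k)) 1) := by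
  induction k using Nat.twoStepInduction with
  | zero =>
    simp only [chebP, Nat.cast_zero, Polynomial.Chebyshev.T_zero, map_one, Matrix.one_mulVec,
      add_zero, sub_zero]
    module
  | one => simpa [chebP] using disc_vtx n hn i
  | more k ih0 ih1 =>
    rw [chebP_add_two, ih0, ih1, Matrix.mulVec_smul, Matrix.mulVec_add, disc_vtx n hn,
      disc_vtx n hn]
    have e1 : i + ((k + 1 : ℕ) : ℤ) + 1 = i + ((k + 2 : ℕ) : ℤ) := by push_cast; ring
    have e2 : i + ((k + 1 : ℕ) : ℤ) - 1 = i + k := by push_cast; ring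
    have e3 : i - ((k + 1 : ℕ) : ℤ) + 1 = i - k := by push_cast; ring
    have e4 : i - ((k + 1 : ℕ) : ℤ) - 1 = i - ((k + 2 : ℕ) : ℤ) := by push_cast; ring
    rw [e1, e2, e3, e4]
    module

theorem stmt_19 (n : ℕ) [NeZero n] (hn : 3 ≤ n)
    (S : Finset (DihedralGroup n))
    (hS : S = {DihedralGroup.sr ((0 : ℕ) : ZMod n), DihedralGroup.sr ((1 : ℕ) : ZMod n)}) :
    exhibitsMinPST n S n := by
  obtain rfl : S = {DihedralGroup.sr 0, DihedralGroup.sr 1} := by simpa using hS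
  constructor
  · refine ⟨vtx n 0, vtx n n, ?_, ?_⟩
    · -- If `vtx 0 = vtx n`, then parity forces `n = 2m`, and `n ∣ m` is impossible.
      intro h
      obtain ⟨m, hm | hm⟩ := Nat.even_or_odd' n
      · have h' : vtx n ((m : ℤ) + m) = vtx n ((m : ℤ) - m) := by
          rw [sub_self, h]
          congr 1
          omega
        have := Nat.le_of_dvd (by omega) ((vtx_add_eq_vtx_sub_iff n m m).1 h')
        omega
      · have e : (n : ℤ) = 2 * (m : ℤ) + 1 := by omega
        have h0 := vtx_even n 0
        rw [mul_zero] at h0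
        rw [h0, e, vtx_odd] at h
        cases h
    · have hp := (vtx_add_eq_vtx_sub_iff n 0 n).2 dvd_rfl
      rw [PST, chebP_vtx n hn, ← hp, zero_add]
      module
  · intro k hk hkn u v _ hPST
    obtain ⟨i, rfl⟩ := vtx_surjective n u
    rw [PST, chebP_vtx n hn] at hPST
    have hne : vtx n (i + k) ≠ vtx n (i - k) := fun h =>
      absurd (Nat.le_of_dvd hk ((vtx_add_eq_vtx_sub_iff n i k).1 h)) (by omega)
    -- The entry at `vtx (i + k)` is `1/2`, whereas a basis vector has entries in `{0, 1}`.
    have h := congrFun hPST (vtx n (i + k))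
    simp only [Pi.smul_apply, Pi.add_apply, Pi.single_apply, if_true, if_neg hne, smul_eq_mul] at h
    split_ifs at h <;> norm_num at h

end PaperPST
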